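/- Let r > 0, α > 1, γ = (α−1)/r and c̄ > 0. Then for every λ ≥ c̄ and every y ∈ ℕ, γ²·(ψ₁(γλ+y) − ψ₁(γλ+y+α+r) + ψ₁(γλ) − ψ₁(γλ+α)) ≤ (2α+2+r)/c̄², where ψ₁ is the trigamma function; this quantity bounds the absolute value of the second derivative of λ ↦ log p(y; λ, r, α). -/

import Mathlib

noncomputable def betaFn (a b : ℝ) : ℝ := Real.Gamma a * Real.Gamma b / Real.Gamma (a + b)

noncomputable def bnbPmf (lam r a : ℝ) (y : ℕ) : ℝ :=
  Real.Gamma ((y : ℝ) + r) / (Real.Gamma ((y : ℝ) + 1) * Real.Gamma r) *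
    (betaFn (a + r) ((a - 1) * lam / r + (y : ℝ)) / betaFn a ((a - 1) * lam / r))

noncomputable def digamma (x : ℝ) : ℝ := deriv (fun t => Real.log (Real.Gamma t)) x

noncomputable def trigamma (x : ℝ) : ℝ := deriv digamma x

/-!
The function `f = log Γ` satisfies `f (x + 1) = f x + log x`. Differentiating this relation twice
gives `ψ (x + 1) = ψ x + 1 / x` and `ψ₁ (x + 1) = ψ₁ x - 1 / x²`. A monotone solution of
`f (x + 1) = f x + g x` with `g` convex and vanishing at infinity is concave, being the pointwise
limit of `f n - ∑ k < n, g (x + k)`. Hence `ψ`, monotone by log-convexity of `Γ`, is concave and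
`ψ₁` is antitone. Covering the shift `s` by `⌈s⌉₊` unit steps then yields
`0 ≤ ψ₁ x - ψ₁ (x + s) ≤ (s + 1) / x²`. The second `λ`-derivative of `log p` is `γ²` times the
difference of two such increments of `ψ₁`, so it is at most `γ²` times their sum.
-/

open Set Filter Topology

section PointwiseLimit

variable {𝕜 E β ι : Type*} [Semiring 𝕜] [PartialOrder 𝕜] [AddCommMonoid E] [SMul 𝕜 E]
  [AddCommMonoid β] [PartialOrder β] [SMul 𝕜 β] [TopologicalSpace β] [OrderClosedTopology β]
  [ContinuousAdd β] [ContinuousConstSMul 𝕜 β]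

theorem concaveOn_of_tendsto {l : Filter ι} [l.NeBot] {s : Set E} {F : ι → E → β} {f : E → β}
    (hF : ∀ᶠ i in l, ConcaveOn 𝕜 s (F i)) (hlim : ∀ x ∈ s, Tendsto (F · x) l (𝓝 (f x))) :
    ConcaveOn 𝕜 s f := by
  obtain ⟨_, hi⟩ := hF.exists
  refine ⟨hi.1, fun x hx y hy p q hp hq hpq => ?_⟩
  refine le_of_tendsto_of_tendsto (((hlim x hx).const_smul p).add ((hlim y hy).const_smul q))
    (hlim _ (hi.1 hx hy hp hq hpq)) ?_
  filter_upwards [hF] with i hi using hi.2 hx hy hp hq hpq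

end PointwiseLimit

/-- `f` is an indefinite sum of `g` on the positive half-line: a solution of the difference equation
`f (x + 1) - f x = g x` for `x > 0`. It is the common form of the functional equations of
`log Γ`, `digamma` and `trigamma`. -/
def IsIndefiniteSum (f g : ℝ → ℝ) : Prop :=
  ∀ ⦃x : ℝ⦄, 0 < x → f (x + 1) = f x + g x

namespace IsIndefiniteSum

variable {f g : ℝ → ℝ} {x : ℝ}

theorem neg (h : IsIndefiniteSum f g) : IsIndefiniteSum (-f) (-g) := fun x hx => by
  simp only [Pi.neg_apply, h hx, neg_add]

theorem of_hasDerivAt {f' g' : ℝ → ℝ} (h : IsIndefiniteSum f g)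
    (hf : ∀ x, 0 < x → HasDerivAt f (f' x) x) (hg : ∀ x, 0 < x → HasDerivAt g (g' x) x) :
    IsIndefiniteSum f' g' := fun x hx => by
  have hshift : HasDerivAt (fun t => f (t + 1)) (f' (x + 1)) x :=
    (hf (x + 1) (by positivity)).comp_add_const x 1
  refine hshift.unique (((hf x hx).add (hg x hx)).congr_of_eventuallyEq ?_)
  filter_upwards [Ioi_mem_nhds hx] with t ht using h ht

theorem add_natCast (h : IsIndefiniteSum f g) (hx : 0 < x) (n : ℕ) :
    f (x + n) = f x + ∑ k ∈ Finset.range n, g (x + k) := by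
  induction n with
  | zero => simp
  | succ n ih =>
    rw [Nat.cast_succ, ← add_assoc, h (by positivity), ih, Finset.sum_range_succ, add_assoc]

theorem add_sub_le (h : IsIndefiniteSum f g) (hf : MonotoneOn f (Ioi 0))
    (hg : AntitoneOn g (Ioi 0)) (hx : 0 < x) {s : ℝ} (hs : 0 ≤ s) :
    f (x + s) - f x ≤ (s + 1) * g x := by
  have hg_nonneg : 0 ≤ g x := by
    have hmono : f x ≤ f (x + 1) := hf hx (by simp only [mem_Ioi]; positivity) (by linarith)
    linarith [h hx]
  have hsum : ∑ k ∈ Finset.range ⌈s⌉₊, g (x + k) ≤ ⌈s⌉₊ * g x := by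
    simpa using Finset.sum_le_card_nsmul (Finset.range ⌈s⌉₊) (fun k => g (x + k)) (g x) fun k _ =>
      hg hx (by simp only [mem_Ioi]; positivity) (by simp)
  calc f (x + s) - f x ≤ f (x + ⌈s⌉₊) - f x := by
        gcongr
        exact hf (by simp only [mem_Ioi]; positivity) (by simp only [mem_Ioi]; positivity)
          (by gcongr; exact Nat.le_ceil s)
    _ = ∑ k ∈ Finset.range ⌈s⌉₊, g (x + k) := by rw [h.add_natCast hx, add_sub_cancel_left]
    _ ≤ ⌈s⌉₊ * g x := hsum
    _ ≤ (s + 1) * g x := by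
        gcongr
        exact (Nat.ceil_lt_add_one hs).le

theorem tendsto_add_natCast_sub (h : IsIndefiniteSum f g) (hf : MonotoneOn f (Ioi 0))
    (hg : Tendsto g atTop (𝓝 0)) (hx : 0 < x) :
    Tendsto (fun n : ℕ => f (x + n) - f n) atTop (𝓝 0) := by
  obtain ⟨m, hm⟩ := exists_nat_ge x
  have hsum : Tendsto (fun n : ℕ => ∑ k ∈ Finset.range m, g (n + k)) atTop (𝓝 0) := by
    simpa using tendsto_finsetSum (Finset.range m) fun k _ =>
      hg.comp (tendsto_atTop_add_const_right atTop (k : ℝ) tendsto_natCast_atTop_atTop)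
  refine tendsto_of_tendsto_of_tendsto_of_le_of_le' tendsto_const_nhds hsum ?_ ?_
  all_goals
    filter_upwards [eventually_gt_atTop 0] with n hn
    have hn_pos : (0 : ℝ) < n := by exact_mod_cast hn
  · exact sub_nonneg.2 (hf hn_pos (add_pos hx hn_pos) (by linarith))
  · rw [sub_le_iff_le_add', ← h.add_natCast hn_pos]
    exact hf (add_pos hx hn_pos) (by simp only [mem_Ioi]; positivity) (by linarith)

theorem tendsto_sub_sum (h : IsIndefiniteSum f g) (hf : MonotoneOn f (Ioi 0))
    (hg : Tendsto g atTop (𝓝 0)) (hx : 0 < x) :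
    Tendsto (fun n : ℕ => f n - ∑ k ∈ Finset.range n, g (x + k)) atTop (𝓝 (f x)) := by
  have hlim := (h.tendsto_add_natCast_sub hf hg hx).const_sub (f x)
  rw [sub_zero] at hlim
  refine hlim.congr fun n => ?_
  rw [h.add_natCast hx]
  ring

theorem concaveOn (h : IsIndefiniteSum f g) (hf : MonotoneOn f (Ioi 0))
    (hg : Tendsto g atTop (𝓝 0)) (hg_convex : ConvexOn ℝ (Ioi 0) g) :
    ConcaveOn ℝ (Ioi 0) f := by
  have hshift (k : ℕ) : ConvexOn ℝ (Ioi 0) fun x => g (x + k) :=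
    (hg_convex.translate_left (k : ℝ)).subset
      (fun x (hx : 0 < x) => show 0 < (k : ℝ) + x by positivity) (convex_Ioi 0)
  have hsum (n : ℕ) : ConvexOn ℝ (Ioi 0) (∑ k ∈ Finset.range n, fun x => g (x + k)) :=
    Finset.sum_induction _ (ConvexOn ℝ (Ioi 0)) (fun _ _ => ConvexOn.add)
      (convexOn_const 0 (convex_Ioi 0)) fun k _ => hshift k
  have hconcave (n : ℕ) :
      ConcaveOn ℝ (Ioi 0) fun x => f n - ∑ k ∈ Finset.range n, g (x + k) := by
    simpa [Pi.sub_def] using (concaveOn_const (f n) (convex_Ioi 0)).sub (hsum n)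
  exact concaveOn_of_tendsto (.of_forall hconcave) fun x hx => h.tendsto_sub_sum hf hg hx

end IsIndefiniteSum

/-- The logarithm of the Gamma function, of which `digamma` is the derivative. Where `Γ` is negative
it is `log |Γ|`. -/
noncomputable def logGamma (x : ℝ) : ℝ :=
  Real.log (Real.Gamma x)

section Polygamma

variable {x : ℝ}

theorem analyticAt_Gamma (hx : ∀ m : ℕ, x ≠ -m) : AnalyticAt ℝ Real.Gamma x := by
  have hx' (m : ℕ) : (x : ℂ) ≠ -m := by exact_mod_cast hx m
  -- `1 / Γ` is entire, so `Γ` is analytic away from the zeros of `1 / Γ`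
  have hGamma : AnalyticAt ℂ Complex.Gamma x := by
    simpa using (Complex.differentiable_one_div_Gamma.analyticAt x).fun_inv
      (inv_ne_zero (Complex.Gamma_ne_zero hx'))
  exact hGamma.re_ofReal

theorem analyticAt_logGamma (hx : 0 < x) : AnalyticAt ℝ logGamma x :=
  (analyticAt_Gamma fun m => by linarith [m.cast_nonneg (α := ℝ)]).log (Real.Gamma_pos_of_pos hx)

theorem analyticAt_digamma (hx : 0 < x) : AnalyticAt ℝ digamma x :=
  (analyticAt_logGamma hx).deriv

theorem hasDerivAt_logGamma (hx : 0 < x) : HasDerivAt logGamma (digamma x) x :=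
  (analyticAt_logGamma hx).differentiableAt.hasDerivAt

theorem hasDerivAt_digamma (hx : 0 < x) : HasDerivAt digamma (trigamma x) x :=
  (analyticAt_digamma hx).differentiableAt.hasDerivAt

theorem isIndefiniteSum_logGamma : IsIndefiniteSum logGamma Real.log := fun x hx => by
  rw [logGamma, logGamma, Real.Gamma_add_one hx.ne',
    Real.log_mul hx.ne' (Real.Gamma_pos_of_pos hx).ne', add_comm]

theorem isIndefiniteSum_digamma : IsIndefiniteSum digamma fun x => x⁻¹ :=
  isIndefiniteSum_logGamma.of_hasDerivAt (fun _ => hasDerivAt_logGamma)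
    fun _ hx => Real.hasDerivAt_log hx.ne'

theorem isIndefiniteSum_trigamma : IsIndefiniteSum trigamma fun x => -(x ^ 2)⁻¹ :=
  isIndefiniteSum_digamma.of_hasDerivAt (fun _ => hasDerivAt_digamma)
    fun _ hx => hasDerivAt_inv hx.ne'

theorem monotoneOn_digamma : MonotoneOn digamma (Ioi 0) :=
  Real.convexOn_log_Gamma.monotoneOn_deriv fun _ hx => (analyticAt_logGamma hx).differentiableAt

theorem concaveOn_digamma : ConcaveOn ℝ (Ioi 0) digamma :=
  isIndefiniteSum_digamma.concaveOn monotoneOn_digamma tendsto_inv_atTop_zero <| by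
    simpa only [zpow_neg_one] using convexOn_zpow (𝕜 := ℝ) (-1)

theorem antitoneOn_trigamma : AntitoneOn trigamma (Ioi 0) :=
  concaveOn_digamma.antitoneOn_deriv fun _ hx => (analyticAt_digamma hx).differentiableAt

theorem trigamma_sub_add_nonneg (hx : 0 < x) {s : ℝ} (hs : 0 ≤ s) :
    0 ≤ trigamma x - trigamma (x + s) :=
  sub_nonneg.2 (antitoneOn_trigamma hx (add_pos_of_pos_of_nonneg hx hs) (by linarith))

theorem trigamma_sub_add_le (hx : 0 < x) {s : ℝ} (hs : 0 ≤ s) :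
    trigamma x - trigamma (x + s) ≤ (s + 1) / x ^ 2 := by
  have hinv : AntitoneOn (fun t : ℝ => (t ^ 2)⁻¹) (Ioi 0) := fun t (ht : 0 < t) u _ htu => by
    beta_reduce
    gcongr
  have hbound := isIndefiniteSum_trigamma.neg.add_sub_le antitoneOn_trigamma.neg
    (by simpa [Pi.neg_def] using hinv) hx hs
  simp only [Pi.neg_apply, neg_neg] at hbound
  rw [div_eq_mul_inv]
  linarith

theorem sq_mul_trigamma_sub_add_le {g c s : ℝ} (hg : 0 < g) (hc : 0 < c) (hx : g * c ≤ x)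
    (hs : 0 ≤ s) : g ^ 2 * (trigamma x - trigamma (x + s)) ≤ (s + 1) / c ^ 2 := by
  have hgc : 0 < g * c := mul_pos hg hc
  calc g ^ 2 * (trigamma x - trigamma (x + s)) ≤ g ^ 2 * ((s + 1) / (g * c) ^ 2) := by
        gcongr
        exact (trigamma_sub_add_le (hgc.trans_le hx) hs).trans (by gcongr)
    _ = (s + 1) / c ^ 2 := by field_simp

end Polygamma

section LogPmf

variable {r a l : ℝ}

theorem hasDerivAt_fwdDiff {𝕜 F : Type*} [NontriviallyNormedField 𝕜] [NormedAddCommGroup F]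
    [NormedSpace 𝕜 F] {f f' : 𝕜 → F} {h x : 𝕜} (hx : HasDerivAt f (f' x) x)
    (hxh : HasDerivAt f (f' (x + h)) (x + h)) :
    HasDerivAt (fwdDiff h f) (fwdDiff h f' x) x :=
  (hxh.comp_add_const x h).sub hx

theorem hasDerivAt_fwdDiff_sub_fwdDiff_comp_mul {f f' : ℝ → ℝ}
    (hf : ∀ x, 0 < x → HasDerivAt f (f' x) x) {g h k c : ℝ} (hl : 0 < g * l)
    (hh : 0 ≤ h) (hk : 0 ≤ k) (hc : 0 ≤ c) :
    HasDerivAt (fun t => fwdDiff h f (g * t) - fwdDiff k f (g * t + c))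
      (g * (fwdDiff h f' (g * l) - fwdDiff k f' (g * l + c))) l := by
  have hlin : HasDerivAt (fun t => g * t) g l := by simpa using (hasDerivAt_id l).const_mul g
  have haffine : HasDerivAt (fun t => g * t + c) g l := hlin.add_const c
  have hdiff₁ : HasDerivAt (fwdDiff h f) (fwdDiff h f' (g * l)) (g * l) :=
    hasDerivAt_fwdDiff (hf _ hl) (hf _ (by positivity))
  have hdiff₂ : HasDerivAt (fwdDiff k f) (fwdDiff k f' (g * l + c)) (g * l + c) :=
    hasDerivAt_fwdDiff (hf _ (by positivity)) (hf _ (by positivity))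
  have hcomp₁ := hdiff₁.comp l hlin
  have hcomp₂ := hdiff₂.comp (h := fun t => g * t + c) l haffine
  rw [mul_comm, sub_mul]
  exact hcomp₁.sub hcomp₂

theorem log_betaFn {b : ℝ} (ha : 0 < a) (hb : 0 < b) :
    Real.log (betaFn a b) = logGamma a - fwdDiff a logGamma b := by
  have hGa := (Real.Gamma_pos_of_pos ha).ne'
  have hGb := (Real.Gamma_pos_of_pos hb).ne'
  have hGab := (Real.Gamma_pos_of_pos (add_pos ha hb)).ne'
  rw [betaFn, Real.log_div (mul_ne_zero hGa hGb) hGab, Real.log_mul hGa hGb, fwdDiff, add_comm b a]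
  simp only [logGamma]
  ring

theorem log_bnbPmf (hr : 0 < r) (ha : 1 < a) (hl : 0 < l) (y : ℕ) :
    Real.log (bnbPmf l r a y) =
      Real.log (Real.Gamma (y + r) / (Real.Gamma (y + 1) * Real.Gamma r)) +
        (logGamma (a + r) - logGamma a) +
        (fwdDiff a logGamma ((a - 1) / r * l) -
          fwdDiff (a + r) logGamma ((a - 1) / r * l + y)) := by
  have ha0 : 0 < a := by linarith
  have hx : 0 < (a - 1) / r * l := mul_pos (div_pos (by linarith) hr) hl
  have hcoeff : 0 < Real.Gamma (y + r) / (Real.Gamma (y + 1) * Real.Gamma r) :=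
    div_pos (Real.Gamma_pos_of_pos (by positivity))
      (mul_pos (Real.Gamma_pos_of_pos (by positivity)) (Real.Gamma_pos_of_pos hr))
  have hnum : 0 < betaFn (a + r) ((a - 1) / r * l + y) :=
    ProbabilityTheory.beta_pos (by positivity) (by positivity)
  have hden : 0 < betaFn a ((a - 1) / r * l) := ProbabilityTheory.beta_pos ha0 hx
  rw [bnbPmf, mul_div_right_comm (a - 1) l r, Real.log_mul hcoeff.ne' (div_pos hnum hden).ne',
    Real.log_div hnum.ne' hden.ne', log_betaFn (by positivity) (by positivity), log_betaFn ha0 hx]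
  ring

theorem deriv_log_bnbPmf (hr : 0 < r) (ha : 1 < a) (hl : 0 < l) (y : ℕ) :
    deriv (fun t => Real.log (bnbPmf t r a y)) l =
      (a - 1) / r *
        (fwdDiff a digamma ((a - 1) / r * l) - fwdDiff (a + r) digamma ((a - 1) / r * l + y)) := by
  have hx : 0 < (a - 1) / r * l := mul_pos (div_pos (by linarith) hr) hl
  have hderiv := hasDerivAt_fwdDiff_sub_fwdDiff_comp_mul (fun _ => hasDerivAt_logGamma) hx
    (by positivity : 0 ≤ a) (by positivity : 0 ≤ a + r) y.cast_nonneg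
  have hlog := eventually_of_mem (Ioi_mem_nhds hl) fun t ht => log_bnbPmf hr ha ht y
  exact ((hderiv.const_add _).congr_of_eventuallyEq hlog).deriv

theorem deriv_deriv_log_bnbPmf (hr : 0 < r) (ha : 1 < a) (hl : 0 < l) (y : ℕ) :
    deriv (fun t => deriv (fun u => Real.log (bnbPmf u r a y)) t) l =
      ((a - 1) / r) ^ 2 *
        (fwdDiff a trigamma ((a - 1) / r * l) -
          fwdDiff (a + r) trigamma ((a - 1) / r * l + y)) := by
  have hx : 0 < (a - 1) / r * l := mul_pos (div_pos (by linarith) hr) hl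
  have hderiv := hasDerivAt_fwdDiff_sub_fwdDiff_comp_mul (fun _ => hasDerivAt_digamma) hx
    (by positivity : 0 ≤ a) (by positivity : 0 ≤ a + r) y.cast_nonneg
  rw [pow_two, mul_assoc]
  refine ((hderiv.const_mul ((a - 1) / r)).congr_of_eventuallyEq ?_).deriv
  filter_upwards [Ioi_mem_nhds hl] with t ht using deriv_log_bnbPmf hr ha ht y

end LogPmf

theorem bnb_log_second_deriv_lam_bound (r a cbar : ℝ) (hr : 0 < r) (ha : 1 < a)
    (hcbar : 0 < cbar) :
    ∀ lam : ℝ, cbar ≤ lam → ∀ y : ℕ,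
      ((a - 1) / r) ^ 2 *
          (trigamma (((a - 1) / r) * lam + (y : ℝ)) - trigamma (((a - 1) / r) * lam + (y : ℝ) + a + r) +
            trigamma (((a - 1) / r) * lam) - trigamma (((a - 1) / r) * lam + a)) ≤
        (2 * a + 2 + r) / cbar ^ 2 ∧
      |deriv (fun l => deriv (fun l' => Real.log (bnbPmf l' r a y)) l) lam| ≤
        ((a - 1) / r) ^ 2 *
          (trigamma (((a - 1) / r) * lam + (y : ℝ)) - trigamma (((a - 1) / r) * lam + (y : ℝ) + a + r) +
            trigamma (((a - 1) / r) * lam) - trigamma (((a - 1) / r) * lam + a)) := by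
  intro lam hlam y
  have hlam_pos : 0 < lam := hcbar.trans_le hlam
  have hderiv := deriv_deriv_log_bnbPmf hr ha hlam_pos y
  have hg : 0 < (a - 1) / r := div_pos (by linarith) hr
  set g := (a - 1) / r
  have hx : g * cbar ≤ g * lam := by gcongr
  have hxy : g * cbar ≤ g * lam + y := hx.trans (by simp)
  have hlower₁ := trigamma_sub_add_nonneg (by positivity : 0 < g * lam + y)
    (by positivity : 0 ≤ a + r)
  have hlower₂ := trigamma_sub_add_nonneg (by positivity : 0 < g * lam) (by positivity : 0 ≤ a)
  rw [add_assoc _ a r, add_sub_assoc]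
  constructor
  · calc _ ≤ (a + r + 1) / cbar ^ 2 + (a + 1) / cbar ^ 2 := by
          rw [mul_add]
          exact add_le_add (sq_mul_trigamma_sub_add_le hg hcbar hxy (by positivity))
            (sq_mul_trigamma_sub_add_le hg hcbar hx (by positivity))
      _ = (2 * a + 2 + r) / cbar ^ 2 := by ring
  · rw [hderiv, abs_mul, abs_sq]
    gcongr
    rw [fwdDiff, fwdDiff, abs_le]
    constructor <;> linarith
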